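/- Let φ : ℝ → ℝ be differentiable with φ′ ≥ 0 and φ′(s) ≤ C₀ for all s, for some constant C₀ ≥ 1. Fix 0 < ν ≤ 1, b ∈ ℝ, t ∈ ℝ, and define for nonzero integer k and real ξ: 𝓜(k,ξ) = 1 + φ(ν^{1/3}|k|^{−1/3}sgn(k)ξ) + (1/k²)(arctan(ξ/k) + π/2), assume additionally 0 ≤ φ ≤ 1, and set 𝓜_t^b(k,ξ) = √(𝓜(k,ξ)) · (1 + k² + (ξ + kt)²)^{b/2}. Then there is a constant C depending only on C₀ and b such that for every nonzero integer k and all ξ ∈ ℝ, |∂_ξ 𝓜_t^b(k,ξ)| ≤ C · ( ν^{1/3}·|k|^{−1/3} + 1/|k| ) · (1 + k² + (ξ + kt)²)^{b/2}. -/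

import Mathlib

/-!
With `𝓜 = 1 + 𝓜₁ + 𝓜₂`, the product rule splits `∂_ξ(√𝓜 Λ)` into `∂_ξ𝓜 / (2√𝓜) · Λ` and
`√𝓜 · ∂_ξΛ`. Since `𝓜 ≥ 1`, the first part only costs `|∂_ξ𝓜₁| ≲ ν^{1/3}|k|^{-1/3}` and
`|∂_ξ𝓜₂| ≤ 1/|k|³`. In the second, `𝓜` is bounded above and
`∂_ξΛ / Λ = b y / (1 + k² + y²)` with `y = ξ + kt`, which `2|k||y| ≤ k² + y²` bounds by
`|b|/(2|k|)`.
-/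

open Real

/-- The symbol `Λ_t^b(k, ξ)` of `(1 - ∂ₓ² - (∂_y + t∂ₓ)²)^{b/2}`, the derivative of order `b` that
commutes with the shear transport `∂_t + y∂ₓ`. It is defined for real `k`, as are the weights. -/
noncomputable def shearedSymbol (b t k ξ : ℝ) : ℝ :=
  (1 + k ^ 2 + (ξ + k * t) ^ 2) ^ (b / 2)

/-- The weight `𝓜₁(k, ξ)`, which captures enhanced dissipation: it varies on the dissipative
frequency scale `|ξ| ∼ ν^{-1/3}|k|^{1/3}`. -/
noncomputable def dissipationWeight (φ : ℝ → ℝ) (ν k ξ : ℝ) : ℝ :=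
  φ (ν ^ ((1 : ℝ) / 3) * |k| ^ (-(1 : ℝ) / 3) * Real.sign k * ξ)

/-- The weight `𝓜₂(k, ξ)`, which captures inviscid damping: it varies on the scale `|ξ| ∼ |k|`. -/
noncomputable def dampingWeight (k ξ : ℝ) : ℝ :=
  1 / k ^ 2 * (arctan (ξ / k) + π / 2)

/-- The energy weight `𝓜 = 1 + 𝓜₁ + 𝓜₂`, normalised so that `𝓜 ≥ 1`. -/
noncomputable def energyWeight (φ : ℝ → ℝ) (ν k ξ : ℝ) : ℝ :=
  1 + dissipationWeight φ ν k ξ + dampingWeight k ξ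

theorem abs_deriv_sqrt_le {f : ℝ → ℝ} {x : ℝ} (hf : DifferentiableAt ℝ f x) (hfx : 1 ≤ f x) :
    |deriv (fun y => √(f y)) x| ≤ |deriv f x| / 2 := by
  have hsqrt : 1 ≤ √(f x) := one_le_sqrt.mpr hfx
  rw [deriv_sqrt hf (by positivity), abs_div, abs_of_pos (by positivity : 0 < 2 * √(f x))]
  gcongr
  linarith

theorem abs_deriv_sqrt_mul_le {f g : ℝ → ℝ} {x A D E : ℝ} (hf : DifferentiableAt ℝ f x)
    (hg : DifferentiableAt ℝ g x) (hfx : 1 ≤ f x) (hfA : f x ≤ A) (hgx : 0 ≤ g x)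
    (hf' : |deriv f x| ≤ D) (hg' : |deriv g x| ≤ E * g x) :
    |deriv (fun y => √(f y) * g y) x| ≤ (D / 2 + √A * E) * g x := by
  have hsqrt : DifferentiableAt ℝ (fun y => √(f y)) x := hf.sqrt (by positivity)
  calc |deriv (fun y => √(f y) * g y) x|
      = |deriv (fun y => √(f y)) x * g x + √(f x) * deriv g x| := by
        rw [deriv_fun_mul hsqrt hg]
    _ ≤ |deriv (fun y => √(f y)) x| * g x + √(f x) * |deriv g x| := by
        refine (abs_add_le _ _).trans_eq ?_
        rw [abs_mul, abs_mul, abs_of_nonneg hgx, abs_of_nonneg (sqrt_nonneg _)]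
    _ ≤ D / 2 * g x + √A * (E * g x) := by
        gcongr
        exact (abs_deriv_sqrt_le hf hfx).trans (by gcongr)
    _ = (D / 2 + √A * E) * g x := by ring

section ShearedSymbol

theorem shearedSymbol_pos (b t k ξ : ℝ) : 0 < shearedSymbol b t k ξ :=
  rpow_pos_of_pos (by positivity) _

theorem hasDerivAt_shearedSymbol (b t k ξ : ℝ) :
    HasDerivAt (shearedSymbol b t k)
      (b * ((ξ + k * t) / (1 + k ^ 2 + (ξ + k * t) ^ 2)) * shearedSymbol b t k ξ) ξ := by
  have hpos : 0 < 1 + k ^ 2 + (ξ + k * t) ^ 2 := by positivity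
  have hbase : HasDerivAt (fun η : ℝ => 1 + k ^ 2 + (η + k * t) ^ 2) (2 * (ξ + k * t)) ξ := by
    simpa using (((hasDerivAt_id ξ).add_const (k * t)).pow 2).const_add (1 + k ^ 2)
  refine (hbase.rpow_const (p := b / 2) (Or.inl hpos.ne')).congr_deriv ?_
  rw [rpow_sub_one hpos.ne', shearedSymbol]
  ring

theorem abs_div_one_add_sq_add_sq_le {k : ℝ} (hk : k ≠ 0) (y : ℝ) :
    |y / (1 + k ^ 2 + y ^ 2)| ≤ 1 / (2 * |k|) := by
  have hpos : 0 < 1 + k ^ 2 + y ^ 2 := by positivity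
  rw [abs_div, abs_of_pos hpos, div_le_div_iff₀ hpos (by positivity), ← sq_abs k, ← sq_abs y]
  linarith [two_mul_le_add_sq |k| |y|]

theorem abs_deriv_shearedSymbol_le {k : ℝ} (hk : k ≠ 0) (b t ξ : ℝ) :
    |deriv (shearedSymbol b t k) ξ| ≤ |b| / (2 * |k|) * shearedSymbol b t k ξ := by
  have hpos := shearedSymbol_pos b t k ξ
  rw [(hasDerivAt_shearedSymbol b t k ξ).deriv, abs_mul, abs_mul, abs_of_pos hpos,
    div_eq_mul_one_div |b|]
  gcongr
  exact abs_div_one_add_sq_add_sq_le hk _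

end ShearedSymbol

section DampingWeight

theorem dampingWeight_nonneg (k ξ : ℝ) : 0 ≤ dampingWeight k ξ :=
  mul_nonneg (by positivity) (by linarith [neg_pi_div_two_lt_arctan (ξ / k)])

theorem dampingWeight_le (k ξ : ℝ) : dampingWeight k ξ ≤ π / k ^ 2 := by
  rw [dampingWeight, div_mul_eq_mul_div, one_mul]
  gcongr
  linarith [arctan_lt_pi_div_two (ξ / k)]

theorem hasDerivAt_dampingWeight {k : ℝ} (hk : k ≠ 0) (ξ : ℝ) :
    HasDerivAt (dampingWeight k) (1 / (k * (k ^ 2 + ξ ^ 2))) ξ := by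
  have harctan := ((hasDerivAt_id ξ).div_const k).arctan.add_const (π / 2)
  refine (harctan.const_mul (1 / k ^ 2)).congr_deriv ?_
  simp only [id]
  field_simp

theorem abs_deriv_dampingWeight_le {k : ℝ} (hk : k ≠ 0) (ξ : ℝ) :
    |deriv (dampingWeight k) ξ| ≤ 1 / |k| ^ 3 := by
  rw [(hasDerivAt_dampingWeight hk ξ).deriv, abs_div, abs_one, abs_mul,
    abs_of_nonneg (by positivity : 0 ≤ k ^ 2 + ξ ^ 2), pow_succ' |k| 2, sq_abs]
  gcongr
  exact le_add_of_nonneg_right (sq_nonneg ξ)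

end DampingWeight

section EnergyWeight

variable {φ : ℝ → ℝ} {ν k C₀ B : ℝ}

theorem differentiable_dissipationWeight (hφ : Differentiable ℝ φ) (ν k : ℝ) :
    Differentiable ℝ (dissipationWeight φ ν k) :=
  hφ.comp (differentiable_id.const_mul _)

theorem abs_deriv_dissipationWeight_le (hφ' : ∀ s, |deriv φ s| ≤ C₀) (hν : 0 ≤ ν) (k ξ : ℝ) :
    |deriv (dissipationWeight φ ν k) ξ| ≤ C₀ * (ν ^ ((1 : ℝ) / 3) * |k| ^ (-(1 : ℝ) / 3)) := by
  have hsign : |Real.sign k| ≤ 1 := by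
    rcases Real.sign_apply_eq k with h | h | h <;> norm_num [h]
  have hscale : 0 ≤ ν ^ ((1 : ℝ) / 3) * |k| ^ (-(1 : ℝ) / 3) := by positivity
  unfold dissipationWeight
  rw [deriv_comp_mul_left, smul_eq_mul, abs_mul, abs_mul, abs_of_nonneg hscale, mul_comm]
  exact mul_le_mul (hφ' _) (mul_le_of_le_one_right hscale hsign) (by positivity)
    ((abs_nonneg _).trans (hφ' 0))

theorem one_le_energyWeight (hφ : ∀ s, 0 ≤ φ s) (ν k ξ : ℝ) : 1 ≤ energyWeight φ ν k ξ := by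
  have hdissipation : 0 ≤ dissipationWeight φ ν k ξ := hφ _
  rw [energyWeight]
  linarith [dampingWeight_nonneg k ξ]

theorem energyWeight_le (hφ : ∀ s, φ s ≤ B) (ν : ℝ) (hk : 1 ≤ |k|) (ξ : ℝ) :
    energyWeight φ ν k ξ ≤ 1 + B + π := by
  have hdissipation : dissipationWeight φ ν k ξ ≤ B := hφ _
  have hdamping : dampingWeight k ξ ≤ π :=
    (dampingWeight_le k ξ).trans (div_le_self pi_pos.le ((one_le_sq_iff_one_le_abs k).mpr hk))
  rw [energyWeight]
  linarith

theorem differentiable_energyWeight (hφ : Differentiable ℝ φ) (ν : ℝ) (hk : k ≠ 0) :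
    Differentiable ℝ (energyWeight φ ν k) :=
  ((differentiable_dissipationWeight hφ ν k).const_add 1).add
    fun ξ => (hasDerivAt_dampingWeight hk ξ).differentiableAt

theorem abs_deriv_energyWeight_le (hφ : Differentiable ℝ φ) (hφ' : ∀ s, |deriv φ s| ≤ C₀)
    (hν : 0 ≤ ν) (hk : k ≠ 0) (ξ : ℝ) :
    |deriv (energyWeight φ ν k) ξ| ≤
      C₀ * (ν ^ ((1 : ℝ) / 3) * |k| ^ (-(1 : ℝ) / 3)) + 1 / |k| ^ 3 := by
  have hdissipation := differentiable_dissipationWeight hφ ν k ξ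
  have hderiv : deriv (energyWeight φ ν k) ξ =
      deriv (dissipationWeight φ ν k) ξ + deriv (dampingWeight k) ξ := by
    unfold energyWeight
    rw [deriv_fun_add (hdissipation.const_add 1)
      (hasDerivAt_dampingWeight hk ξ).differentiableAt, deriv_const_add]
  rw [hderiv]
  exact (abs_add_le _ _).trans
    (add_le_add (abs_deriv_dissipationWeight_le hφ' hν k ξ) (abs_deriv_dampingWeight_le hk ξ))

end EnergyWeight

theorem stmt18_general {φ : ℝ → ℝ} {C₀ B ν k : ℝ} (hφ : Differentiable ℝ φ)
    (hφ' : ∀ s, |deriv φ s| ≤ C₀) (hφ_nonneg : ∀ s, 0 ≤ φ s) (hφ_le : ∀ s, φ s ≤ B)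
    (hν : 0 ≤ ν) (hk : 1 ≤ |k|) (b t ξ : ℝ) :
    |deriv (fun η => √(energyWeight φ ν k η) * shearedSymbol b t k η) ξ| ≤
      (C₀ + 1 + √(1 + B + π) * |b|) / 2 *
        (ν ^ ((1 : ℝ) / 3) * |k| ^ (-(1 : ℝ) / 3) + 1 / |k|) * shearedSymbol b t k ξ := by
  have hk₀ : k ≠ 0 := abs_pos.mp (one_pos.trans_le hk)
  have hC₀ : 0 ≤ C₀ := (abs_nonneg _).trans (hφ' 0)
  have hpos := shearedSymbol_pos b t k ξ
  have hproduct := abs_deriv_sqrt_mul_le (differentiable_energyWeight hφ ν hk₀ ξ)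
    (hasDerivAt_shearedSymbol b t k ξ).differentiableAt (one_le_energyWeight hφ_nonneg ν k ξ)
    (energyWeight_le hφ_le ν hk ξ) hpos.le (abs_deriv_energyWeight_le hφ hφ' hν hk₀ ξ)
    (abs_deriv_shearedSymbol_le hk₀ b t ξ)
  have hcube : 1 / |k| ^ 3 ≤ 1 / |k| := by
    gcongr
    exact le_self_pow₀ hk three_ne_zero
  refine hproduct.trans (mul_le_mul_of_nonneg_right ?_ hpos.le)
  have hsplit : √(1 + B + π) * (|b| / (2 * |k|)) = √(1 + B + π) * |b| / 2 * (1 / |k|) := by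
    field_simp
  have hcross_scale :
      0 ≤ (1 + √(1 + B + π) * |b|) / 2 * (ν ^ ((1 : ℝ) / 3) * |k| ^ (-(1 : ℝ) / 3)) := by
    positivity
  have hcross_inv : 0 ≤ C₀ / 2 * (1 / |k|) := by positivity
  linarith

/-- Estimate (4.9): for the combined multiplier `𝓜_t^b(k,ξ) = √𝓜(k,ξ)·Λ_t^b(k,ξ)` with
`𝓜 = 1 + 𝓜₁ + 𝓜₂`, there is a constant `C` depending only on `C₀` and `b` such that for
every nonzero integer `k` and every `ξ`,
`|∂_ξ𝓜_t^b(k,ξ)| ≤ C(ν^{1/3}|k|^{−1/3} + 1/|k|)Λ_t^b(k,ξ)`. -/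
theorem stmt18 (C₀ b : ℝ) (hC₀ : 1 ≤ C₀) :
    ∃ C : ℝ, 0 < C ∧
      ∀ φ : ℝ → ℝ, Differentiable ℝ φ → (∀ s : ℝ, 0 ≤ deriv φ s) →
        (∀ s : ℝ, deriv φ s ≤ C₀) → (∀ s : ℝ, 0 ≤ φ s) → (∀ s : ℝ, φ s ≤ 1) →
      ∀ ν : ℝ, 0 < ν → ν ≤ 1 → ∀ t : ℝ, ∀ k : ℤ, k ≠ 0 → ∀ ξ : ℝ,
        |deriv (fun ξ' : ℝ =>
            Real.sqrt (1 + φ (ν ^ ((1 : ℝ) / 3) * |(k : ℝ)| ^ (-(1 : ℝ) / 3) * (k.sign : ℝ) * ξ')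
                + (1 / (k : ℝ) ^ 2) * (Real.arctan (ξ' / (k : ℝ)) + Real.pi / 2)) *
              (1 + (k : ℝ) ^ 2 + (ξ' + (k : ℝ) * t) ^ 2) ^ (b / 2)) ξ|
          ≤ C * (ν ^ ((1 : ℝ) / 3) * |(k : ℝ)| ^ (-(1 : ℝ) / 3) + 1 / |(k : ℝ)|) *
              (1 + (k : ℝ) ^ 2 + (ξ + (k : ℝ) * t) ^ 2) ^ (b / 2) := by
  refine ⟨(C₀ + 1 + √(1 + 1 + π) * |b|) / 2, by positivity, ?_⟩
  intro φ hφ hφ'_nonneg hφ'_le hφ_nonneg hφ_le ν hν _ t k hk ξ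
  simpa only [energyWeight, dissipationWeight, dampingWeight, shearedSymbol, Real.sign_intCast]
    using stmt18_general hφ (fun s => (abs_of_nonneg (hφ'_nonneg s)).trans_le (hφ'_le s))
      hφ_nonneg hφ_le hν.le (k := k) (mod_cast Int.one_le_abs hk) b t ξ
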